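/- arXiv:2101.11094 — 2 statements merged into one kernel-verified Lean document; each statement's English description precedes it below -/
import Mathlib

section
/- (Mahler–Weyl) Let Λ be a lattice of full rank in ℝ^n with successive minima λ_1 ≤ … ≤ λ_n. Then there exists a ℤ-basis v^1,…,v^n of Λ such that λ_s ≤ |v^s|_2 ≤ max{1, s/2}·λ_s for all s = 1,…,n. -/
/-- The Euclidean norm of a vector in `ι → ℝ`. -/
noncomputable def enorm2 {ι : Type*} [Fintype ι] (v : ι → ℝ) : ℝ := Real.sqrt (∑ i, v i ^ 2)

/-- The `s`-th successive minimum of a set `Λ ⊆ ℝ^ι` (with respect to the Euclidean norm). -/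
noncomputable def succMin {ι : Type*} [Fintype ι] (Λ : Set (ι → ℝ)) (s : ℕ) : ℝ :=
  sInf {r : ℝ | 0 < r ∧ ∃ w : Fin s → ι → ℝ,
    (∀ k, w k ∈ Λ) ∧ LinearIndependent ℝ w ∧ ∀ k, enorm2 (w k) ≤ r}

/-!
Choose lattice vectors `w 0, w 1, …` greedily, each a shortest one outside the span `F k` of its
`k` predecessors; then `‖w k‖ = λ_(k+1)`. The coefficients of `w k` occurring in the lattice vectors
of `F (k + 1)` form a group `(1/m)ℤ` with `m ≥ 1` depending on `k`, and lattice vectors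
`v k ∈ F (k + 1)` with coefficient `1/m` form a lattice basis. If `m = 1`, take `v k = w k`. If
`m ≥ 2`, rounding the coordinates along `w 0, …, w (k - 1)` gives
`‖v k‖ ≤ (‖w 0‖ + ⋯ + ‖w (k - 1)‖) / 2 + ‖w k‖ / m ≤ (k + 1) / 2 * λ_(k+1)`.
Finally `‖v k‖ ≥ λ_(k+1)` because `v k` lies outside `F k`.
-/

open Module Submodule
open Set (Ioc range)

/-- The `s`-th successive minimum of `Λ` with respect to a seminorm `p`, encoded as in `succMin`
with an arbitrary seminorm instead of the Euclidean norm. -/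
noncomputable def successiveMinimum {V : Type*} [AddCommGroup V] [Module ℝ V] (p : Seminorm ℝ V)
    (Λ : Set V) (s : ℕ) : ℝ :=
  sInf {r : ℝ | 0 < r ∧ ∃ u : Fin s → V,
    (∀ i, u i ∈ Λ) ∧ LinearIndependent ℝ u ∧ ∀ i, p (u i) ≤ r}

lemma exists_eq_zmultiples_of_finite_inter_Ioc {G : Type*} [AddCommGroup G]
    [LinearOrder G] [IsOrderedAddMonoid G] [Archimedean G] {H : AddSubgroup G} {a : G}
    (ha : 0 < a) (haH : a ∈ H) (hfin : ((H : Set G) ∩ Ioc 0 a).Finite) :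
    ∃ (g : G) (m : ℕ), 0 < g ∧ m • g = a ∧ H = AddSubgroup.zmultiples g := by
  obtain ⟨g, ⟨hgH, hg, hga⟩, hmin⟩ := Set.exists_min_image _ id hfin ⟨a, haH, ha, le_rfl⟩
  have hleast : IsLeast {x | x ∈ H ∧ 0 < x} g :=
    ⟨⟨hgH, hg⟩, fun x ⟨hxH, hx⟩ ↦
      (le_total x a).elim (fun hxa ↦ hmin x ⟨hxH, hx, hxa⟩) hga.trans⟩
  have hH : H = AddSubgroup.zmultiples g := by
    rw [AddSubgroup.cyclic_of_min hleast, AddSubgroup.zmultiples_eq_closure]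
  obtain ⟨m, hm⟩ := AddSubgroup.mem_zmultiples_iff.1 (hH ▸ haH)
  have hm_pos : 0 < m := (zsmul_left_strictMono hg).lt_iff_lt.1 (by simpa [hm] using ha)
  lift m to ℕ using hm_pos.le
  exact ⟨g, m, hg, by rwa [natCast_zsmul] at hm, hH⟩

lemma exists_notMem_of_finrank_lt_card {K V ι : Type*} [DivisionRing K] [AddCommGroup V]
    [Module K V] [Fintype ι] {u : ι → V} (hu : LinearIndependent K u) {S : Submodule K V}
    [FiniteDimensional K S] (hS : finrank K S < Fintype.card ι) : ∃ i, u i ∉ S := by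
  by_contra! h
  have hle : span K (range u) ≤ S := span_le.2 (Set.range_subset_iff.2 h)
  exact hS.not_ge ((finrank_span_eq_card hu).ge.trans (finrank_mono hle))

section Flag

variable {R M : Type*} [Semiring R] [AddCommMonoid M] [Module R M] {w w' : ℕ → M} {k l : ℕ}

variable (R) in
/-- The `k`-th member of the flag generated by a sequence: the span of its first `k` terms. -/
def flag (w : ℕ → M) (k : ℕ) : Submodule R M := span R (range fun i : Fin k ↦ w i)

lemma flag_zero : flag R w 0 = ⊥ := by simp [flag]

lemma flag_succ : flag R w (k + 1) = flag R w k ⊔ R ∙ w k := by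
  have hrange : (range fun i : Fin (k + 1) ↦ w i) = (range fun i : Fin k ↦ w i) ∪ {w k} := by
    ext x
    simp [Fin.exists_fin_succ', eq_comm, or_comm]
  rw [flag, hrange, span_union, flag]

lemma flag_mono : Monotone (flag R w) :=
  monotone_nat_of_le_succ fun _ ↦ flag_succ.ge.trans' le_sup_left

lemma mem_flag_of_lt (h : k < l) : w k ∈ flag R w l := subset_span ⟨⟨k, h⟩, rfl⟩

lemma flag_congr (h : ∀ i < k, w i = w' i) : flag R w k = flag R w' k :=
  congrArg (span R <| range ·) <| funext fun i ↦ h i i.2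

lemma flag_le {N : Submodule R M} (h : ∀ i < k, w i ∈ N) : flag R w k ≤ N :=
  span_le.2 <| Set.range_subset_iff.2 fun i ↦ h i i.2

lemma finrank_flag_le [StrongRankCondition R] : finrank R (flag R w k) ≤ k :=
  (finrank_range_le_card _).trans_eq (Fintype.card_fin k)

end Flag

section VectorSpace

variable {K V : Type*} [DivisionRing K] [AddCommGroup V] [Module K V] {w : ℕ → V} {k : ℕ}

instance : FiniteDimensional K (flag K w k) :=
  FiniteDimensional.span_of_finite K (Set.finite_range _)

lemma linearIndependent_of_notMem_flag (h : ∀ i < k, w i ∉ flag K w i) :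
    LinearIndependent K fun i : Fin k ↦ w i := by
  induction k with
  | zero => exact linearIndependent_empty_type
  | succ k ih =>
    exact linearIndependent_finSucc'.2 ⟨ih fun i hi ↦ h i (by omega), h k (by omega)⟩

end VectorSpace

lemma mem_flag_int_of_mem_flag {R M : Type*} [Ring R] [AddCommGroup M] [Module R M]
    {L : Submodule ℤ M} {w v : ℕ → M} {n : ℕ} (hv : ∀ k < n, v k ∈ L)
    (hgen : ∀ k < n, ∀ x ∈ L, x ∈ flag R w (k + 1) → ∃ m : ℤ, x - m • v k ∈ flag R w k)
    {x : M} (hxL : x ∈ L) (hx : x ∈ flag R w n) : x ∈ flag ℤ v n := by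
  induction n generalizing x with
  | zero => simpa only [flag_zero, mem_bot] using hx
  | succ n ih =>
    obtain ⟨m, hm⟩ := hgen n n.lt_succ_self x hxL hx
    have hvn : m • v n ∈ flag ℤ v (n + 1) := smul_mem _ m (mem_flag_of_lt n.lt_succ_self)
    have hsub : x - m • v n ∈ flag ℤ v n :=
      ih (fun k hk ↦ hv k (by omega)) (fun k hk ↦ hgen k (by omega))
        (L.sub_mem hxL (L.smul_mem m (hv n n.lt_succ_self))) hm
    simpa only [sub_add_cancel] using add_mem (flag_mono n.le_succ hsub) hvn

section Seminorm

variable {V : Type*} [AddCommGroup V] [Module ℝ V] {p : Seminorm ℝ V} {L : Submodule ℤ V}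

variable (p) in
lemma exists_mem_span_int_sub_le {ι : Type*} [Fintype ι] (w : ι → V) {y : V}
    (hy : y ∈ span ℝ (range w)) : ∃ z ∈ span ℤ (range w), p (y - z) ≤ ∑ i, p (w i) / 2 := by
  obtain ⟨c, rfl⟩ := (mem_span_range_iff_exists_fun ℝ).1 hy
  refine ⟨∑ i, round (c i) • w i, (mem_span_range_iff_exists_fun ℤ).2 ⟨_, rfl⟩, ?_⟩
  calc
    p (∑ i, c i • w i - ∑ i, round (c i) • w i) = p (∑ i, (c i - round (c i)) • w i) := by
      simp only [sub_smul, Int.cast_smul_eq_zsmul, Finset.sum_sub_distrib]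
    _ ≤ ∑ i, p ((c i - round (c i)) • w i) :=
      Finset.le_sum_of_subadditive p (map_zero p).le (map_add_le_add p) _ _
    _ = ∑ i, |c i - round (c i)| * p (w i) := by simp only [map_smul_eq_mul, Real.norm_eq_abs]
    _ ≤ ∑ i, p (w i) / 2 := by
      gcongr with i
      rw [div_eq_inv_mul, inv_eq_one_div]
      gcongr
      exact abs_sub_round (c i)

lemma exists_shortest_notMem {L S : Set V} (hL : ∀ R, (L ∩ p.closedBall 0 R).Finite)
    (hS : ∃ x ∈ L, x ∉ S) : ∃ x ∈ L, x ∉ S ∧ ∀ y ∈ L, y ∉ S → p x ≤ p y := by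
  obtain ⟨x₀, hx₀L, hx₀S⟩ := hS
  have hfin : (L ∩ p.closedBall 0 (p x₀) ∩ Sᶜ).Finite := (hL _).inter_of_left _
  obtain ⟨x, ⟨⟨hxL, hx⟩, hxS⟩, hmin⟩ :=
    Set.exists_min_image _ p hfin ⟨x₀, ⟨hx₀L, p.mem_closedBall_zero.2 le_rfl⟩, hx₀S⟩
  refine ⟨x, hxL, hxS, fun y hyL hyS ↦ ?_⟩
  obtain hy | hy := le_total (p y) (p x₀)
  · exact hmin y ⟨⟨hyL, p.mem_closedBall_zero.2 hy⟩, hyS⟩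
  · exact (p.mem_closedBall_zero.1 hx).trans hy

lemma exists_generator_mod_ker (hL : ∀ R, ((L : Set V) ∩ p.closedBall 0 R).Finite)
    (f : V →ₗ[ℝ] ℝ) {w : V} (hwL : w ∈ L) (hfw : f w = 1) {C : ℝ}
    (hred : ∀ x ∈ L, ∃ x' ∈ L, f x' = f x ∧ p x' ≤ C + |f x| * p w) :
    ∃ v ∈ L, f v ≠ 0 ∧ (∀ x ∈ L, ∃ m : ℤ, f (x - m • v) = 0) ∧
      p v ≤ max (p w) (C + p w / 2) := by
  let H : AddSubgroup ℝ := L.toAddSubgroup.map f.toAddMonoidHom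
  have hfin : ((H : Set ℝ) ∩ Ioc 0 1).Finite := by
    refine ((hL (C + p w)).image f).subset ?_
    rintro _ ⟨⟨x, hxL, rfl⟩, hpos, hle⟩
    obtain ⟨x', hx'L, hfx', hpx'⟩ := hred x hxL
    refine ⟨x', ⟨hx'L, p.mem_closedBall_zero.2 (hpx'.trans ?_)⟩, hfx'⟩
    have habs : |f x| ≤ 1 := (abs_of_pos hpos).trans_le hle
    gcongr
    exact mul_le_of_le_one_left (apply_nonneg p w) habs
  obtain ⟨g, m, hg, hmg, hH⟩ :=
    exists_eq_zmultiples_of_finite_inter_Ioc one_pos (show 1 ∈ H from ⟨w, hwL, hfw⟩) hfin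
  obtain ⟨v, hvL, hfv, hpv⟩ : ∃ v ∈ L, f v = g ∧ p v ≤ max (p w) (C + p w / 2) := by
    rw [nsmul_eq_mul] at hmg
    obtain rfl | rfl | hm : m = 0 ∨ m = 1 ∨ 2 ≤ m := by omega
    · simp at hmg
    · exact ⟨w, hwL, by simpa [hfw] using hmg.symm, le_max_left _ _⟩
    · have hm' : (2 : ℝ) ≤ m := mod_cast hm
      have hg_half : |g| ≤ 1 / 2 := by rw [abs_of_pos hg]; nlinarith
      obtain ⟨x, hxL, hfx : f x = g⟩ : g ∈ H := hH ▸ AddSubgroup.mem_zmultiples g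
      obtain ⟨v, hvL, hfv, hpv⟩ := hred x hxL
      rw [hfx] at hfv hpv
      have hpw : |g| * p w ≤ 1 / 2 * p w := by gcongr
      exact ⟨v, hvL, hfv, hpv.trans (le_max_of_le_right (by linarith))⟩
  refine ⟨v, hvL, hfv ▸ hg.ne', fun x hxL ↦ ?_, hpv⟩
  have hfx : f x ∈ H := ⟨x, hxL, rfl⟩
  obtain ⟨k, hk⟩ := AddSubgroup.mem_zmultiples_iff.1 (hH ▸ hfx)
  exact ⟨k, by rw [map_sub, map_zsmul, hfv, hk, sub_self]⟩

lemma exists_generator_mod_subspace (hL : ∀ R, ((L : Set V) ∩ p.closedBall 0 R).Finite)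
    {S : Submodule ℝ V} {w : V} (hwL : w ∈ L) (hwS : w ∉ S) {C : ℝ}
    (hC : ∀ y ∈ S, ∃ z ∈ L, z ∈ S ∧ p (y - z) ≤ C) :
    ∃ v ∈ L, v ∉ S ∧ (∀ x ∈ L, x ∈ S ⊔ ℝ ∙ w → ∃ m : ℤ, x - m • v ∈ S) ∧
      p v ≤ max (p w) (C + p w / 2) := by
  obtain ⟨f, hfS, hfw⟩ := LinearMap.exists_extend_of_notMem (0 : S →ₗ[ℝ] ℝ) hwS 1
  replace hfS : ∀ y ∈ S, f y = 0 := fun y hy ↦ LinearMap.congr_fun hfS ⟨y, hy⟩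
  have hdecomp : ∀ x ∈ S ⊔ ℝ ∙ w, x - f x • w ∈ S := by
    intro x hx
    obtain ⟨y, hy, u, hu, rfl⟩ := mem_sup.1 hx
    obtain ⟨t, rfl⟩ := mem_span_singleton.1 hu
    simpa [hfS y hy, hfw] using hy
  let M : Submodule ℤ V := L ⊓ (S ⊔ ℝ ∙ w).restrictScalars ℤ
  have hM : ∀ R, ((M : Set V) ∩ p.closedBall 0 R).Finite := fun R ↦
    (hL R).subset (Set.inter_subset_inter_left _ Set.inter_subset_left)
  have hwM : w ∈ M := ⟨hwL, mem_sup_right (mem_span_singleton_self w)⟩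
  have hred : ∀ x ∈ M, ∃ x' ∈ M, f x' = f x ∧ p x' ≤ C + |f x| * p w := by
    rintro x ⟨hxL, hxS⟩
    obtain ⟨z, hzL, hzS, hz⟩ := hC _ (hdecomp x hxS)
    refine ⟨x - z, ⟨L.sub_mem hxL hzL, sub_mem hxS (mem_sup_left hzS)⟩, by simp [hfS z hzS], ?_⟩
    calc
      p (x - z) = p (x - f x • w - z + f x • w) := by congr 1; module
      _ ≤ p (x - f x • w - z) + p (f x • w) := map_add_le_add p _ _
      _ ≤ C + |f x| * p w := by rw [map_smul_eq_mul, Real.norm_eq_abs]; gcongr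
  obtain ⟨v, hvM, hfv, hgen, hpv⟩ := exists_generator_mod_ker hM f hwM hfw hred
  refine ⟨v, hvM.1, fun hvS ↦ hfv (hfS v hvS), fun x hxL hxS ↦ ?_, hpv⟩
  obtain ⟨m, hm⟩ := hgen x ⟨hxL, hxS⟩
  have hmem : x - m • v ∈ M := M.sub_mem ⟨hxL, hxS⟩ (M.smul_mem m hvM)
  exact ⟨m, by simpa [hm] using hdecomp _ hmem.2⟩

variable (p L) in
/-- The first `n` terms of `w` are chosen greedily in the lattice `L`: each is a `p`-shortest vector
of `L` outside the span of the preceding ones. The terms from index `n` on are arbitrary. -/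
structure IsGreedy (n : ℕ) (w : ℕ → V) : Prop where
  mem ⦃k : ℕ⦄ (hk : k < n) : w k ∈ L
  notMem_flag ⦃k : ℕ⦄ (hk : k < n) : w k ∉ flag ℝ w k
  le_of_notMem_flag ⦃k : ℕ⦄ (hk : k < n) ⦃x : V⦄ (hxL : x ∈ L) (hx : x ∉ flag ℝ w k) :
    p (w k) ≤ p x

namespace IsGreedy

variable {n k : ℕ} {w : ℕ → V}

lemma update (hw : IsGreedy p L n w) {x : V} (hxL : x ∈ L) (hx : x ∉ flag ℝ w n)
    (hmin : ∀ y ∈ L, y ∉ flag ℝ w n → p x ≤ p y) :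
    IsGreedy p L (n + 1) (Function.update w n x) := by
  have hflag : ∀ k ≤ n, flag ℝ (Function.update w n x) k = flag ℝ w k := fun k hk ↦
    flag_congr fun i hi ↦ Function.update_of_ne (hi.trans_le hk).ne _ _
  have hlt : ∀ k < n, Function.update w n x k = w k := fun k hk ↦
    Function.update_of_ne hk.ne _ _
  have hself : Function.update w n x n = x := Function.update_self _ _ _
  refine ⟨?_, ?_, ?_⟩ <;> refine Nat.forall_lt_succ_right.2 ⟨fun k hk ↦ ?_, ?_⟩
  · rw [hlt k hk]
    exact hw.mem hk
  · rwa [hself]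
  · rw [hflag k hk.le, hlt k hk]
    exact hw.notMem_flag hk
  · rwa [hflag n le_rfl, hself]
  · rw [hflag k hk.le, hlt k hk]
    exact hw.le_of_notMem_flag hk
  · rwa [hflag n le_rfl, hself]

lemma linearIndependent (hw : IsGreedy p L n w) : LinearIndependent ℝ fun i : Fin n ↦ w i :=
  linearIndependent_of_notMem_flag hw.notMem_flag

lemma mono (hw : IsGreedy p L n w) (hk : k ≤ n) : IsGreedy p L k w where
  mem _ hi := hw.mem (hi.trans_le hk)
  notMem_flag _ hi := hw.notMem_flag (hi.trans_le hk)
  le_of_notMem_flag _ hi := hw.le_of_notMem_flag (hi.trans_le hk)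

lemma apply_le_apply (hw : IsGreedy p L n w) (hk : k < n) {i : ℕ} (hi : i ≤ k) :
    p (w i) ≤ p (w k) :=
  hw.le_of_notMem_flag (hi.trans_lt hk) (hw.mem hk) fun h ↦ hw.notMem_flag hk (flag_mono hi h)

lemma successiveMinimum_eq (hw : IsGreedy p L n w) (hk : k < n) :
    successiveMinimum p L (k + 1) = p (w k) := by
  have hw' : IsGreedy p L (k + 1) w := hw.mono hk
  have hmem : ∀ r > p (w k), r ∈ {r : ℝ | 0 < r ∧ ∃ u : Fin (k + 1) → V,
      (∀ i, u i ∈ (L : Set V)) ∧ LinearIndependent ℝ u ∧ ∀ i, p (u i) ≤ r} := fun r hr ↦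
    ⟨(apply_nonneg p _).trans_lt hr, fun i ↦ w i, fun i ↦ hw'.mem i.2, hw'.linearIndependent,
      fun i ↦ (hw.apply_le_apply hk (Nat.lt_succ_iff.1 i.2)).trans hr.le⟩
  apply le_antisymm
  · exact le_of_forall_gt_imp_ge_of_dense fun r hr ↦ csInf_le ⟨0, fun _ h ↦ h.1.le⟩ (hmem r hr)
  · refine le_csInf ⟨_, hmem _ (lt_add_one _)⟩ ?_
    rintro r ⟨-, u, huL, hu, hur⟩
    obtain ⟨i, hi⟩ : ∃ i, u i ∉ flag ℝ w k :=
      exists_notMem_of_finrank_lt_card hu (by simpa using Nat.lt_succ_of_le finrank_flag_le)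
    exact (hw.le_of_notMem_flag hk (huL i) hi).trans (hur i)

lemma flag_eq_span [FiniteDimensional ℝ (span ℝ (L : Set V))] (hw : IsGreedy p L n w)
    (hn : finrank ℝ (span ℝ (L : Set V)) = n) : flag ℝ w n = span ℝ (L : Set V) := by
  refine eq_of_le_of_finrank_eq (flag_le fun i hi ↦ subset_span (hw.mem hi)) ?_
  rw [hn, flag, finrank_span_eq_card hw.linearIndependent, Fintype.card_fin]

lemma exists_mem_sub_le (hw : IsGreedy p L n w) (hk : k < n) {y : V} (hy : y ∈ flag ℝ w k) :
    ∃ z ∈ L, z ∈ flag ℝ w k ∧ p (y - z) ≤ k / 2 * p (w k) := by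
  obtain ⟨z, hz, hle⟩ := exists_mem_span_int_sub_le p _ hy
  have hzL : z ∈ L := flag_le (fun i hi ↦ hw.mem (hi.trans hk)) hz
  refine ⟨z, hzL, span_subset_span ℤ ℝ _ hz, hle.trans ?_⟩
  calc
    ∑ i : Fin k, p (w i) / 2 ≤ ∑ _i : Fin k, p (w k) / 2 := by
      gcongr with i
      exact hw.apply_le_apply hk i.2.le
    _ = k / 2 * p (w k) := by
      rw [Finset.sum_const, Finset.card_univ, Fintype.card_fin, nsmul_eq_mul]
      ring

lemma exists_generator_mod_flag (hL : ∀ R, ((L : Set V) ∩ p.closedBall 0 R).Finite)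
    (hw : IsGreedy p L n w) (hk : k < n) :
    ∃ v ∈ L, v ∉ flag ℝ w k ∧ (∀ x ∈ L, x ∈ flag ℝ w (k + 1) → ∃ m : ℤ, x - m • v ∈ flag ℝ w k) ∧
      p v ≤ max 1 ((k + 1 : ℝ) / 2) * p (w k) := by
  obtain ⟨v, hvL, hv, hgen, hpv⟩ := exists_generator_mod_subspace hL (hw.mem hk)
    (hw.notMem_flag hk) fun _ ↦ hw.exists_mem_sub_le hk
  refine ⟨v, hvL, hv, fun x hxL hx ↦ hgen x hxL (flag_succ.le hx), hpv.trans_eq ?_⟩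
  rw [max_mul_of_nonneg _ _ (apply_nonneg p (w k))]
  ring_nf

end IsGreedy

lemma exists_isGreedy (hL : ∀ R, ((L : Set V) ∩ p.closedBall 0 R).Finite) {n : ℕ}
    (hn : n ≤ finrank ℝ (span ℝ (L : Set V))) : ∃ w, IsGreedy p L n w := by
  induction n with
  | zero => exact ⟨0, ⟨by simp, by simp, by simp⟩⟩
  | succ n ih =>
    obtain ⟨w, hw⟩ := ih (by omega)
    have hout : ∃ x ∈ L, x ∉ (flag ℝ w n : Set V) := by
      by_contra! hle
      have hrank := (finrank_mono (span_le.2 hle)).trans (finrank_flag_le (R := ℝ) (w := w))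
      omega
    obtain ⟨x, hxL, hx, hmin⟩ := exists_shortest_notMem hL hout
    exact ⟨_, hw.update hxL hx hmin⟩

/-- The discreteness of `L` is encoded by the finiteness of its intersection with each `p`-ball. -/
theorem stmt7_general {n : ℕ} [FiniteDimensional ℝ (span ℝ (L : Set V))]
    (hn : finrank ℝ (span ℝ (L : Set V)) = n)
    (hL : ∀ R, ((L : Set V) ∩ p.closedBall 0 R).Finite) :
    ∃ v : Fin n → V, LinearIndependent ℝ v ∧ span ℤ (range v) = L ∧
      ∀ s : Fin n, successiveMinimum p L (s + 1) ≤ p (v s) ∧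
        p (v s) ≤ max 1 ((s + 1 : ℝ) / 2) * successiveMinimum p L (s + 1) := by
  obtain ⟨w, hw⟩ := exists_isGreedy hL hn.ge
  choose! v hvL hv hgen hle using fun k ↦ hw.exists_generator_mod_flag hL (k := k)
  have hspan : flag ℤ v n = L := le_antisymm (flag_le hvL) fun x hx ↦
    mem_flag_int_of_mem_flag hvL hgen hx (hw.flag_eq_span hn ▸ subset_span hx)
  refine ⟨fun i ↦ v i, ?_, hspan, fun s ↦ ?_⟩
  · rw [linearIndependent_iff_card_eq_finrank_span, Fintype.card_fin, Set.finrank,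
      ← span_span_of_tower ℤ, ← flag, hspan, hn]
  · rw [hw.successiveMinimum_eq s.2]
    exact ⟨hw.le_of_notMem_flag s.2 (hvL s s.2) (hv s s.2), hle s s.2⟩

end Seminorm

lemma finrank_span_span_int {R M ι : Type*} [Ring R] [Nontrivial R]
    [StrongRankCondition R] [AddCommGroup M] [Module R M] [Fintype ι] {b : ι → M}
    (hb : LinearIndependent R b) :
    finrank R (span R (span ℤ (range b) : Set M)) = Fintype.card ι := by
  rw [span_span_of_tower, finrank_span_eq_card hb]

section Euclidean

variable {ι : Type*} [Fintype ι]

lemma enorm2_eq_norm_toLp (v : ι → ℝ) : enorm2 v = ‖WithLp.toLp 2 v‖ := by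
  simp [enorm2, EuclideanSpace.norm_eq]

variable (ι) in
/-- The Euclidean norm `enorm2` as a seminorm on `ι → ℝ`. -/
noncomputable def euclideanSeminorm : Seminorm ℝ (ι → ℝ) :=
  .of enorm2
    (fun v w ↦ by simpa only [enorm2_eq_norm_toLp, WithLp.toLp_add] using norm_add_le _ _)
    (fun c v ↦ by simp only [enorm2_eq_norm_toLp, WithLp.toLp_smul, norm_smul])

lemma euclideanSeminorm_apply (v : ι → ℝ) : euclideanSeminorm ι v = enorm2 v := rfl

lemma successiveMinimum_euclideanSeminorm (Λ : Set (ι → ℝ)) (s : ℕ) :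
    successiveMinimum (euclideanSeminorm ι) Λ s = succMin Λ s := rfl

lemma norm_le_enorm2 (v : ι → ℝ) : ‖v‖ ≤ enorm2 v := by
  rw [enorm2_eq_norm_toLp, pi_norm_le_iff_of_nonneg (norm_nonneg _)]
  exact PiLp.norm_apply_le (WithLp.toLp 2 v)

lemma finite_span_int_inter_closedBall {b : ι → ι → ℝ} (hb : LinearIndependent ℝ b) (R : ℝ) :
    ((span ℤ (range b) : Set (ι → ℝ)) ∩ (euclideanSeminorm ι).closedBall 0 R).Finite := by
  have hspan : ⊤ ≤ span ℝ (range b) := (hb.span_eq_top_of_card_eq_finrank' (by simp)).ge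
  have hfin := ZSpan.setFinite_inter (Basis.mk hb hspan)
    (Metric.isBounded_closedBall (x := 0) (r := R))
  rw [Basis.coe_mk] at hfin
  refine hfin.subset ?_
  rintro x ⟨hx, hxR⟩
  rw [Seminorm.mem_closedBall_zero, euclideanSeminorm_apply] at hxR
  exact ⟨mem_closedBall_zero_iff.2 ((norm_le_enorm2 x).trans hxR), hx⟩

end Euclidean

theorem stmt7 (n : ℕ) (hn : 0 < n)
    -- a full-rank lattice in `ℝ^n` is the `ℤ`-span of an `ℝ`-basis `b`
    (b : Fin n → (Fin n → ℝ)) (hb : LinearIndependent ℝ b) :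
    ∃ v : Fin n → (Fin n → ℝ),
      -- `v` is a `ℤ`-basis of the lattice
      LinearIndependent ℝ v ∧
      Submodule.span ℤ (Set.range v) = Submodule.span ℤ (Set.range b) ∧
      -- `λ_s ≤ |v^s|₂ ≤ max{1, s/2} λ_s` (here `v s` plays the role of `v^(s+1)`)
      ∀ s : Fin n,
        succMin (↑(Submodule.span ℤ (Set.range b)) : Set (Fin n → ℝ)) ((s : ℕ) + 1) ≤
            enorm2 (v s) ∧
        enorm2 (v s) ≤ max 1 (((s : ℕ) + 1 : ℝ) / 2) *
            succMin (↑(Submodule.span ℤ (Set.range b)) : Set (Fin n → ℝ)) ((s : ℕ) + 1) := by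
  simpa only [successiveMinimum_euclideanSeminorm, euclideanSeminorm_apply] using stmt7_general
    ((finrank_span_span_int hb).trans (Fintype.card_fin n)) (finite_span_int_inter_closedBall hb)
end

section
/- Let M, N be positive integers, let φ : [0,∞) → (0,1] be non-increasing, and let L ∈ ℝ^{M×N} be φ-multiplicatively badly approximable. Let Q ∈ [1,∞)^N, ε, T > 0, a_1,…,a_M ∈ ℝ with Σ_i a_i = 0, c ∈ ℝ, and assume μ_i := θ e^{a_i − c} ≥ c₁ ε^{1/M}/T for all i, for some c₁ > 0. Let λ_1 ≤ … ≤ λ_{M+N} be the successive minima of Λ' := D Λ_L, and let v^1,…,v^{M+N} be a ℤ-basis of Λ' with |v^s|_2 ≤ κ λ_s for all s (κ ≥ 1), written as v^s = D·(L_1 q^s + p^s_1, …, L_M q^s + p^s_M, q^s_1, …, q^s_N) with p^s ∈ ℤ^M, q^s ∈ ℤ^N, q^s ≠ 0 for all s. Assume further: I(v^s) ⊆ I(v^{s+1}) for all s; for all s and l, l ∈ I(v^s) implies {1,…,l} ⊆ I(v^s); and {1,…,max{M+1,s}} ⊆ I(v^s) for all s. Let M ≤ s̲ ≤ M+N−1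 and suppose {1,…,s+1} ⊆ I(v^s) for all s = 1,…,s̲. Then there exists a constant c₂ > 0 depending only on M, N, κ, c, c₁ such that (ε Q^N)^{s̲/(M+N)}/(λ_1⋯λ_{s̲}) ≤ c₂ ( 1 + (ε Q^N/φ(Q))^{s̲/(s̲+1)} ). -/
/-- Distance from a real number to the nearest integer. -/
noncomputable def distNearestInt (x : ℝ) : ℝ := |x - round x|

/-- The geometric mean `(Q₁ ⋯ Q_N)^(1/N)`. -/
noncomputable def geomMean (N : ℕ) (Q : Fin N → ℝ) : ℝ := (∏ j, Q j) ^ ((1 : ℝ) / (N : ℝ))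

/-- `L` is `φ`-multiplicatively badly approximable. -/
def multBadlyApprox (M N : ℕ) (φ : ℝ → ℝ) (L : Matrix (Fin M) (Fin N) ℝ) : Prop :=
  ∀ q : Fin N → ℤ, q ≠ 0 →
    φ ((∏ j, max 1 |(q j : ℝ)|) ^ ((1 : ℝ) / (N : ℝ))) ≤
      (∏ j, max 1 |(q j : ℝ)|) * ∏ i, distNearestInt (∑ j, L i j * (q j : ℝ))

/-- `θ := (ε Q^N)^(1/(M+N)) / ε^(1/M)`. -/
noncomputable def thetaVal (M N : ℕ) (ε Qbar : ℝ) : ℝ :=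
  (ε * Qbar ^ N) ^ ((1 : ℝ) / ((M : ℝ) + (N : ℝ))) / ε ^ ((1 : ℝ) / (M : ℝ))

/-- The diagonal entry `μ_i = θ e^(a_i - c)` of the matrix `D`. -/
noncomputable def muVal (M N : ℕ) (ε : ℝ) (Q : Fin N → ℝ) (c : ℝ) (a : Fin M → ℝ)
    (i : Fin M) : ℝ :=
  thetaVal M N ε (geomMean N Q) * Real.exp (a i - c)

/-- The diagonal entry `ν_j = θ^(-M/N) Q/Q_j` of the matrix `D`. -/
noncomputable def nuVal (M N : ℕ) (ε : ℝ) (Q : Fin N → ℝ) (j : Fin N) : ℝ :=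
  thetaVal M N ε (geomMean N Q) ^ (-(M : ℝ) / (N : ℝ)) * geomMean N Q / Q j

/-- The lattice `Λ' = D Λ_L`, as a set of vectors in `ℝ^M × ℝ^N`. -/
def latticeD (M N : ℕ) (L : Matrix (Fin M) (Fin N) ℝ) (ε : ℝ) (Q : Fin N → ℝ) (c : ℝ)
    (a : Fin M → ℝ) : Set (Fin M ⊕ Fin N → ℝ) :=
  {v | ∃ (p : Fin M → ℤ) (q : Fin N → ℤ),
    (∀ i, v (Sum.inl i) = muVal M N ε Q c a i * ((∑ j, L i j * (q j : ℝ)) + (p i : ℝ))) ∧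
    (∀ j, v (Sum.inr j) = nuVal M N ε Q j * (q j : ℝ))}

/-- The vectors `v^s = D (L₁ q^s + p^s₁, …, L_M q^s + p^s_M, q^s)`. -/
def basisFormD (M N : ℕ) (L : Matrix (Fin M) (Fin N) ℝ) (ε : ℝ) (Q : Fin N → ℝ) (c : ℝ)
    (a : Fin M → ℝ) (v : Fin (M + N) → (Fin M ⊕ Fin N → ℝ))
    (p : Fin (M + N) → Fin M → ℤ) (q : Fin (M + N) → Fin N → ℤ) : Prop :=
  ∀ s, (∀ i, v s (Sum.inl i) =
          muVal M N ε Q c a i * ((∑ j, L i j * (q s j : ℝ)) + (p s i : ℝ))) ∧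
       (∀ j, v s (Sum.inr j) = nuVal M N ε Q j * (q s j : ℝ))

/-- The support `I(v) = {h : v_h ≠ 0}` of a vector. -/
def Iset {ι : Type*} (v : ι → ℝ) : Set ι := {h | v h ≠ 0}

/-- The position (in `{1, …, M+N}`) of a coordinate index of `ℝ^M × ℝ^N`. -/
def ordIdx {M N : ℕ} (k : Fin M ⊕ Fin N) : ℕ :=
  Sum.elim (fun i : Fin M => (i : ℕ) + 1) (fun j : Fin N => M + (j : ℕ) + 1) k

/-!
Put `X = ε Q^N`, `t = X^(1/(M+N))`, `n = sbar`, `ρ_s = κ λ_s / t` and `P = ρ_1 ⋯ ρ_n`. Since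
`ν_j = t / Q_j`, the bound `|v^s| ≤ κ λ_s = t ρ_s` gives `|q^s_j| ≤ Q_j ρ_s` for the integer
coordinates of `v^s`, and the quantity to be bounded is `t^n / (λ_1 ⋯ λ_n) = κ^n P⁻¹`.

If `ρ_1 ≥ 1`, then `P ≥ 1`. Otherwise apply multiplicative bad approximability to `q = q^1`. As
`ρ_1 < 1`, we have `max(1, |q_j|) ≤ Q_j`, so `φ` may be evaluated at `Q`. For `M ≤ s ≤ n` the
integer `q^s_j` with `j = s + 1 - M` is nonzero, so `1 ≤ Q_j ρ_s`, and this sharpens the bound to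
`max(1, |q_j|) ≤ Q_j ρ_s`. Together with `μ_i ‖L_i q‖ ≤ t ρ_1` and `∏ μ_i = t^M e^(-Mc) / ε` this
gives `e^(-Mc) φ(Q) / X ≤ ρ_1^M ρ_M ⋯ ρ_n ≤ ρ_1 P`. Eliminating `ρ_1` by means of `ρ_1^n ≤ P`
yields `P⁻¹ ≤ (e^(Mc) X / φ(Q))^(n/(n+1))`.
-/

theorem pow_mul_prod_Icc_le {f : ℕ → ℝ} {r : ℝ} {n : ℕ} (hr₀ : 0 ≤ r) (hr₁ : r ≤ 1)
    (hf : ∀ s ∈ Finset.Icc 1 n, r ≤ f s) (k : ℕ) :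
    r ^ k * ∏ s ∈ Finset.Icc (k + 1) n, f s ≤ ∏ s ∈ Finset.Icc 1 n, f s := by
  induction k with
  | zero => simp
  | succ k ih =>
    refine le_trans ?_ ih
    rw [pow_succ, mul_assoc]
    refine mul_le_mul_of_nonneg_left ?_ (pow_nonneg hr₀ k)
    rcases le_or_gt (k + 1) n with hkn | hkn
    · rw [← Finset.mul_prod_Ioc_eq_prod_Icc hkn, ← Finset.Icc_add_one_left_eq_Ioc]
      refine mul_le_mul_of_nonneg_right (hf _ (Finset.mem_Icc.2 ⟨by omega, hkn⟩)) ?_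
      refine Finset.prod_nonneg fun s hs => hr₀.trans (hf s ?_)
      rw [Finset.mem_Icc] at hs ⊢
      omega
    · rw [Finset.Icc_eq_empty_of_lt hkn, Finset.Icc_eq_empty_of_lt (Nat.lt_succ_of_lt hkn),
        Finset.prod_empty, mul_one]
      exact hr₁

theorem rpow_div_add_one_le {x y r : ℝ} {n : ℕ} (hx : 0 ≤ x) (hy : 0 ≤ y)
    (hyx : y ≤ r * x) (hrx : r ^ n ≤ x) : y ^ ((n : ℝ) / (n + 1)) ≤ x := by
  have hpow : y ^ n ≤ x ^ (n + 1) :=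
    calc y ^ n ≤ (r * x) ^ n := pow_le_pow_left₀ hy hyx n
      _ = r ^ n * x ^ n := mul_pow r x n
      _ ≤ x * x ^ n := by gcongr
      _ = x ^ (n + 1) := (pow_succ' x n).symm
  calc y ^ ((n : ℝ) / (n + 1)) = (y ^ n) ^ ((n : ℝ) + 1)⁻¹ := by
        rw [div_eq_mul_inv, Real.rpow_mul hy, Real.rpow_natCast]
    _ ≤ (x ^ (n + 1)) ^ ((n : ℝ) + 1)⁻¹ := by gcongr
    _ = x := by exact_mod_cast Real.pow_rpow_inv_natCast hx n.succ_ne_zero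

theorem exp_mul_rpow_le {x y α : ℝ} (hy : 0 ≤ y) (hα₀ : 0 ≤ α) (hα₁ : α ≤ 1) :
    (Real.exp x * y) ^ α ≤ Real.exp |x| * y ^ α := by
  rw [Real.mul_rpow (Real.exp_pos x).le hy, ← Real.exp_mul]
  gcongr
  calc x * α ≤ |x| * α := by gcongr; exact le_abs_self x
    _ ≤ |x| := mul_le_of_le_one_right (abs_nonneg x) hα₁

theorem distNearestInt_le_abs_add_intCast (x : ℝ) (n : ℤ) : distNearestInt x ≤ |x + n| := by
  calc |x - round x| ≤ |x - (-n : ℤ)| := round_le x (-n)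
    _ = |x + n| := by rw [Int.cast_neg, sub_neg_eq_add]

theorem prod_ite_add_le {R : Type*} [CommMonoid R] (f : ℕ → R) {m n N : ℕ} (hn : n < m + N) :
    ∏ j : Fin N, (if m + (j : ℕ) ≤ n then f (m + j) else 1) = ∏ s ∈ Finset.Icc m n, f s := by
  rw [Fin.prod_univ_eq_prod_range (fun j => if m + j ≤ n then f (m + j) else 1) N,
    Finset.range_eq_Ico, Finset.prod_Ico_add (fun s => if s ≤ n then f s else 1) 0 N m,
    ← Finset.prod_filter]
  congr 1
  ext s
  simp only [Finset.mem_filter, Finset.mem_Ico, Finset.mem_Icc]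
  omega

theorem prod_max_one_abs_le {N m n : ℕ} {x Q : Fin N → ℝ} {f : ℕ → ℝ} {r : ℝ} (hn : n < m + N)
    (hQ : ∀ j, 1 ≤ Q j) (hr : r ≤ 1) (hf : ∀ s ∈ Finset.Icc m n, r ≤ f s)
    (hx : ∀ j, |x j| ≤ Q j * r) (hQf : ∀ j : Fin N, m + j ≤ n → 1 ≤ Q j * f (m + j)) :
    ∏ j, max 1 |x j| ≤ (∏ j, Q j) * ∏ s ∈ Finset.Icc m n, f s := by
  rw [← prod_ite_add_le f hn, ← Finset.prod_mul_distrib]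
  refine Finset.prod_le_prod (fun j _ => zero_le_one.trans (le_max_left _ _)) fun j _ => ?_
  have hQj : 0 ≤ Q j := zero_le_one.trans (hQ j)
  split_ifs with hj
  · exact max_le (hQf j hj) ((hx j).trans (mul_le_mul_of_nonneg_left
      (hf _ (Finset.mem_Icc.2 ⟨by omega, hj⟩)) hQj))
  · rw [mul_one]
    exact max_le (hQ j) ((hx j).trans (mul_le_of_le_one_right hQj hr))

section SuccessiveMinima

variable {ι : Type*} [Fintype ι]

theorem abs_apply_le_enorm2 (v : ι → ℝ) (i : ι) : |v i| ≤ enorm2 v :=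
  Real.abs_le_sqrt (Finset.single_le_sum (fun j _ => sq_nonneg (v j)) (Finset.mem_univ i))

-- `succMin Λ t` is the junk value `sInf ∅ = 0` if `Λ` has no `t` independent vectors.
theorem succMin_le_succMin {Λ : Set (ι → ℝ)} {s t : ℕ} (hst : s ≤ t) {w : Fin t → ι → ℝ}
    (hwΛ : ∀ k, w k ∈ Λ) (hw : LinearIndependent ℝ w) : succMin Λ s ≤ succMin Λ t := by
  refine csInf_le_csInf ⟨0, fun r hr => hr.1.le⟩ ?_ ?_
  · have hnn : ∀ k ∈ Finset.univ, 0 ≤ enorm2 (w k) := fun k _ => Real.sqrt_nonneg _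
    exact ⟨1 + ∑ k, enorm2 (w k), by linarith [Finset.sum_nonneg hnn], w, hwΛ, hw,
      fun k => by linarith [Finset.single_le_sum hnn (Finset.mem_univ k)]⟩
  · rintro r ⟨hr, u, huΛ, hu, hur⟩
    exact ⟨hr, u ∘ Fin.castLE hst, fun k => huΛ _, hu.comp _ (Fin.castLE_injective hst),
      fun k => hur _⟩

end SuccessiveMinima

/-- The number `(ε Q^N)^(1/(M+N))`: half the side of the cube onto which `D` maps the box
`∏ i, [-ε^(1/M) e^(c - a_i), ε^(1/M) e^(c - a_i)] × ∏ j, [-Q_j, Q_j]`. It is the unit in which the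
successive minima of `D Λ_L` are measured. -/
noncomputable def cubeRadius (M N : ℕ) (ε : ℝ) (Q : Fin N → ℝ) : ℝ :=
  (ε * geomMean N Q ^ N) ^ ((1 : ℝ) / ((M : ℝ) + (N : ℝ)))

section Dilation

variable {M N : ℕ} {ε : ℝ} {Q : Fin N → ℝ}

theorem geomMean_pos (hQ : ∀ j, 0 < Q j) : 0 < geomMean N Q :=
  Real.rpow_pos_of_pos (Finset.prod_pos fun j _ => hQ j) _

theorem geomMean_pow (hN : N ≠ 0) (hQ : ∀ j, 0 < Q j) : geomMean N Q ^ N = ∏ j, Q j := by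
  rw [geomMean, one_div, Real.rpow_inv_natCast_pow (Finset.prod_nonneg fun j _ => (hQ j).le) hN]

theorem cubeRadius_pos (hε : 0 < ε) (hQ : ∀ j, 0 < Q j) : 0 < cubeRadius M N ε Q :=
  Real.rpow_pos_of_pos (mul_pos hε (pow_pos (geomMean_pos hQ) N)) _

theorem cubeRadius_pow (hε : 0 < ε) (hQ : ∀ j, 0 < Q j) (s : ℕ) :
    cubeRadius M N ε Q ^ s = (ε * geomMean N Q ^ N) ^ ((s : ℝ) / ((M : ℝ) + (N : ℝ))) := by
  rw [cubeRadius, ← Real.rpow_mul_natCast (mul_pos hε (pow_pos (geomMean_pos hQ) N)).le,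
    one_div_mul_eq_div]

theorem cubeRadius_pow_add (hN : N ≠ 0) (hε : 0 < ε) (hQ : ∀ j, 0 < Q j) :
    cubeRadius M N ε Q ^ (M + N) = ε * geomMean N Q ^ N := by
  have hMN : (M : ℝ) + N ≠ 0 := by positivity
  rw [cubeRadius_pow hε hQ, Nat.cast_add, div_self hMN, Real.rpow_one]

theorem thetaVal_geomMean_pos (hε : 0 < ε) (hQ : ∀ j, 0 < Q j) :
    0 < thetaVal M N ε (geomMean N Q) :=
  div_pos (cubeRadius_pos hε hQ) (Real.rpow_pos_of_pos hε _)

theorem thetaVal_geomMean_pow (hM : M ≠ 0) (hε : 0 < ε) :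
    thetaVal M N ε (geomMean N Q) ^ M = cubeRadius M N ε Q ^ M / ε := by
  rw [thetaVal, div_pow, one_div (M : ℝ), Real.rpow_inv_natCast_pow hε.le hM, cubeRadius]

theorem muVal_pos (hε : 0 < ε) (hQ : ∀ j, 0 < Q j) (c : ℝ) (a : Fin M → ℝ) (i : Fin M) :
    0 < muVal M N ε Q c a i :=
  mul_pos (thetaVal_geomMean_pos hε hQ) (Real.exp_pos _)

theorem prod_muVal (hM : M ≠ 0) (hε : 0 < ε) (c : ℝ) {a : Fin M → ℝ} (ha : ∑ i, a i = 0) :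
    ∏ i, muVal M N ε Q c a i = cubeRadius M N ε Q ^ M / ε * Real.exp (-(M * c)) := by
  simp only [muVal, Finset.prod_mul_distrib, ← Real.exp_sum, Finset.sum_sub_distrib, ha,
    Finset.prod_const, Finset.sum_const, Finset.card_univ, Fintype.card_fin, nsmul_eq_mul, zero_sub,
    thetaVal_geomMean_pow hM hε]

theorem nuVal_eq_cubeRadius_div (hM : M ≠ 0) (hN : N ≠ 0) (hε : 0 < ε) (hQ : ∀ j, 0 < Q j)
    (j : Fin N) : nuVal M N ε Q j = cubeRadius M N ε Q / Q j := by
  set t := cubeRadius M N ε Q with ht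
  set θ := thetaVal M N ε (geomMean N Q)
  have ht₀ : 0 < t := cubeRadius_pos hε hQ
  have hθ₀ : 0 < θ := thetaVal_geomMean_pos hε hQ
  have hG₀ : 0 < geomMean N Q := geomMean_pos hQ
  have hθ_pow : (θ ^ (-(M : ℝ) / N)) ^ N = (θ ^ M)⁻¹ := by
    rw [← Real.rpow_mul_natCast hθ₀.le, div_mul_cancel₀ _ (Nat.cast_ne_zero.2 hN),
      Real.rpow_neg hθ₀.le, Real.rpow_natCast]
  have hpow : (θ ^ (-(M : ℝ) / N) * geomMean N Q) ^ N = t ^ N := by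
    rw [mul_pow, hθ_pow, thetaVal_geomMean_pow hM hε, inv_div, ← ht, div_mul_eq_mul_div,
      ← cubeRadius_pow_add (M := M) hN hε hQ, ← ht, pow_add, mul_div_cancel_left₀ _ (by positivity)]
  rw [nuVal, (pow_left_inj₀ (by positivity) ht₀.le hN).1 hpow]

end Dilation

theorem multBadlyApprox.le_prod_mul_prod {M N : ℕ} {φ : ℝ → ℝ} {L : Matrix (Fin M) (Fin N) ℝ}
    (hL : multBadlyApprox M N φ L) (hφ : AntitoneOn φ (Set.Ici 0)) {Q : Fin N → ℝ}
    {q : Fin N → ℤ} (hq : q ≠ 0) (hqQ : ∀ j, max 1 |(q j : ℝ)| ≤ Q j) :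
    φ (geomMean N Q) ≤
      (∏ j, max 1 |(q j : ℝ)|) * ∏ i, distNearestInt (∑ j, L i j * (q j : ℝ)) := by
  have hmax : ∀ j ∈ Finset.univ, 0 ≤ max 1 |(q j : ℝ)| :=
    fun j _ => zero_le_one.trans (le_max_left _ _)
  have hprod : 0 ≤ ∏ j, max 1 |(q j : ℝ)| := Finset.prod_nonneg hmax
  have hmean : (∏ j, max 1 |(q j : ℝ)|) ^ ((1 : ℝ) / N) ≤ geomMean N Q :=
    Real.rpow_le_rpow hprod (Finset.prod_le_prod hmax fun j _ => hqQ j) (by positivity)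
  have hroot := Real.rpow_nonneg hprod ((1 : ℝ) / N)
  exact (hφ hroot (hroot.trans hmean) hmean).trans (hL q hq)

namespace basisFormD

variable {M N : ℕ} {φ : ℝ → ℝ} {L : Matrix (Fin M) (Fin N) ℝ} {ε c r : ℝ} {Q : Fin N → ℝ}
  {a : Fin M → ℝ} {v : Fin (M + N) → (Fin M ⊕ Fin N → ℝ)} {p : Fin (M + N) → Fin M → ℤ}
  {q : Fin (M + N) → Fin N → ℤ} {s : Fin (M + N)} {f : ℕ → ℝ} {n : ℕ}

theorem mem_latticeD (h : basisFormD M N L ε Q c a v p q) (s : Fin (M + N)) :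
    v s ∈ latticeD M N L ε Q c a :=
  ⟨p s, q s, h s⟩

theorem ne_zero_of_mem_Iset (h : basisFormD M N L ε Q c a v p q) {j : Fin N}
    (hj : Sum.inr j ∈ Iset (v s)) : q s j ≠ 0 := by
  intro hqj
  exact hj (by rw [(h s).2 j, hqj, Int.cast_zero, mul_zero])

theorem apply_inr (h : basisFormD M N L ε Q c a v p q) (hM : M ≠ 0) (hε : 0 < ε)
    (hQ : ∀ j, 0 < Q j) (s : Fin (M + N)) (j : Fin N) :
    v s (Sum.inr j) = cubeRadius M N ε Q / Q j * q s j := by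
  rw [(h s).2 j, nuVal_eq_cubeRadius_div hM (Fin.pos j).ne' hε hQ]

theorem enorm2_pos (h : basisFormD M N L ε Q c a v p q) (hM : M ≠ 0) (hε : 0 < ε)
    (hQ : ∀ j, 0 < Q j) (hq : q s ≠ 0) : 0 < enorm2 (v s) := by
  obtain ⟨j, hj⟩ := Function.ne_iff.1 hq
  refine (abs_pos.2 ?_).trans_le (abs_apply_le_enorm2 (v s) (Sum.inr j))
  rw [h.apply_inr hM hε hQ]
  exact mul_ne_zero (div_pos (cubeRadius_pos hε hQ) (hQ j)).ne' (Int.cast_ne_zero.2 hj)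

theorem abs_le_mul (h : basisFormD M N L ε Q c a v p q) (hM : M ≠ 0) (hε : 0 < ε)
    (hQ : ∀ j, 0 < Q j) (hr : enorm2 (v s) ≤ cubeRadius M N ε Q * r) (j : Fin N) :
    |(q s j : ℝ)| ≤ Q j * r := by
  have ht : 0 < cubeRadius M N ε Q := cubeRadius_pos hε hQ
  have hv := (abs_apply_le_enorm2 (v s) (Sum.inr j)).trans hr
  rw [h.apply_inr hM hε hQ, abs_mul, abs_of_pos (div_pos ht (hQ j)), div_mul_eq_mul_div,
    mul_div_assoc] at hv
  exact (div_le_iff₀' (hQ j)).1 (le_of_mul_le_mul_left hv ht)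

theorem prod_muVal_mul_prod_distNearestInt_le (h : basisFormD M N L ε Q c a v p q) (hε : 0 < ε)
    (hQ : ∀ j, 0 < Q j) (hr : enorm2 (v s) ≤ r) :
    (∏ i, muVal M N ε Q c a i) * ∏ i, distNearestInt (∑ j, L i j * (q s j : ℝ)) ≤ r ^ M := by
  rw [← Finset.prod_mul_distrib, ← Fin.prod_const]
  refine Finset.prod_le_prod (fun i _ => mul_nonneg (muVal_pos hε hQ c a i).le (abs_nonneg _))
    fun i _ => ?_
  calc muVal M N ε Q c a i * distNearestInt (∑ j, L i j * (q s j : ℝ))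
      ≤ muVal M N ε Q c a i * |∑ j, L i j * (q s j : ℝ) + p s i| :=
        mul_le_mul_of_nonneg_left (distNearestInt_le_abs_add_intCast _ _)
          (muVal_pos hε hQ c a i).le
    _ = |v s (Sum.inl i)| := by rw [(h s).1 i, abs_mul, abs_of_pos (muVal_pos hε hQ c a i)]
    _ ≤ r := (abs_apply_le_enorm2 (v s) (Sum.inl i)).trans hr

theorem one_le_mul_of_mem_Iset (h : basisFormD M N L ε Q c a v p q) (hM : M ≠ 0) (hε : 0 < ε)
    (hQ : ∀ j, 0 < Q j) (hr : enorm2 (v s) ≤ cubeRadius M N ε Q * r) {j : Fin N}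
    (hj : Sum.inr j ∈ Iset (v s)) : 1 ≤ Q j * r :=
  calc (1 : ℝ) ≤ |(q s j : ℝ)| := by exact_mod_cast Int.one_le_abs (h.ne_zero_of_mem_Iset hj)
    _ ≤ Q j * r := h.abs_le_mul hM hε hQ hr j

theorem prod_muVal_mul_le (h : basisFormD M N L ε Q c a v p q) (hM : M ≠ 0) (hN : N ≠ 0)
    (hε : 0 < ε) (hQ : ∀ j, 1 ≤ Q j) (hL : multBadlyApprox M N φ L)
    (hφ : AntitoneOn φ (Set.Ici 0)) (hq : q s ≠ 0)
    (hv : enorm2 (v s) ≤ cubeRadius M N ε Q * r) (hr₀ : 0 ≤ r) (hr₁ : r ≤ 1) (hn : n < M + N)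
    (hf : ∀ k ∈ Finset.Icc M n, r ≤ f k) (hQf : ∀ j : Fin N, M + j ≤ n → 1 ≤ Q j * f (M + j)) :
    (∏ i, muVal M N ε Q c a i) * φ (geomMean N Q) ≤
      (cubeRadius M N ε Q * r) ^ M * (geomMean N Q ^ N * ∏ k ∈ Finset.Icc M n, f k) := by
  have hQ₀ : ∀ j, 0 < Q j := fun j => zero_lt_one.trans_le (hQ j)
  have ht : 0 < cubeRadius M N ε Q := cubeRadius_pos hε hQ₀
  have hμ : 0 < ∏ i, muVal M N ε Q c a i := Finset.prod_pos fun i _ => muVal_pos hε hQ₀ c a i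
  have hqr : ∀ j, |(q s j : ℝ)| ≤ Q j * r := h.abs_le_mul hM hε hQ₀ hv
  have hqQ : ∀ j, max 1 |(q s j : ℝ)| ≤ Q j := fun j =>
    max_le (hQ j) ((hqr j).trans (mul_le_of_le_one_right (hQ₀ j).le hr₁))
  set A := ∏ j, max 1 |(q s j : ℝ)|
  set B := ∏ i, distNearestInt (∑ j, L i j * (q s j : ℝ))
  have hA : A ≤ geomMean N Q ^ N * ∏ k ∈ Finset.Icc M n, f k := by
    rw [geomMean_pow hN hQ₀]
    exact prod_max_one_abs_le hn hQ hr₁ hf hqr hQf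
  calc (∏ i, muVal M N ε Q c a i) * φ (geomMean N Q)
      ≤ (∏ i, muVal M N ε Q c a i) * (A * B) := by
        gcongr
        exact hL.le_prod_mul_prod hφ hq hqQ
    _ = ((∏ i, muVal M N ε Q c a i) * B) * A := by ring
    _ ≤ (cubeRadius M N ε Q * r) ^ M * (geomMean N Q ^ N * ∏ k ∈ Finset.Icc M n, f k) :=
        mul_le_mul (h.prod_muVal_mul_prod_distNearestInt_le hε hQ₀ hv) hA
          (Finset.prod_nonneg fun j _ => zero_le_one.trans (le_max_left _ _)) (by positivity)

theorem exp_neg_mul_div_le (h : basisFormD M N L ε Q c a v p q) (hM : M ≠ 0) (hN : N ≠ 0)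
    (hε : 0 < ε) (hQ : ∀ j, 1 ≤ Q j) (ha : ∑ i, a i = 0) (hL : multBadlyApprox M N φ L)
    (hφ : AntitoneOn φ (Set.Ici 0)) (hq : q s ≠ 0)
    (hv : enorm2 (v s) ≤ cubeRadius M N ε Q * r) (hr₀ : 0 ≤ r) (hr₁ : r ≤ 1) (hn : n < M + N)
    (hf : ∀ k ∈ Finset.Icc 1 n, r ≤ f k) (hQf : ∀ j : Fin N, M + j ≤ n → 1 ≤ Q j * f (M + j)) :
    Real.exp (-(M * c)) * φ (geomMean N Q) / (ε * geomMean N Q ^ N) ≤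
      r * ∏ k ∈ Finset.Icc 1 n, f k := by
  have hQ₀ : ∀ j, 0 < Q j := fun j => zero_lt_one.trans_le (hQ j)
  have ht : 0 < cubeRadius M N ε Q := cubeRadius_pos hε hQ₀
  have hG : 0 < geomMean N Q := geomMean_pos hQ₀
  have hbound := h.prod_muVal_mul_le hM hN hε hQ hL hφ hq hv hr₀ hr₁ hn
    (fun k hk => hf k (Finset.Icc_subset_Icc_left (Nat.one_le_iff_ne_zero.2 hM) hk)) hQf
  rw [prod_muVal hM hε c ha] at hbound
  set t := cubeRadius M N ε Q
  set G := geomMean N Q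
  obtain ⟨k, rfl⟩ := Nat.exists_eq_add_one_of_ne_zero hM
  calc Real.exp (-((k + 1 : ℕ) * c)) * φ G / (ε * G ^ N)
      ≤ r ^ (k + 1) * ∏ i ∈ Finset.Icc (k + 1) n, f i := by
        rw [div_le_iff₀ (by positivity)]
        refine le_of_mul_le_mul_left (a := t ^ (k + 1) / ε) ?_ (by positivity)
        calc t ^ (k + 1) / ε * (Real.exp (-((k + 1 : ℕ) * c)) * φ G)
            ≤ (t * r) ^ (k + 1) * (G ^ N * ∏ i ∈ Finset.Icc (k + 1) n, f i) := by
              rwa [← mul_assoc]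
          _ = t ^ (k + 1) / ε * (r ^ (k + 1) * (∏ i ∈ Finset.Icc (k + 1) n, f i) *
                (ε * G ^ N)) := by
              rw [mul_pow]
              field_simp
    _ = r * (r ^ k * ∏ i ∈ Finset.Icc (k + 1) n, f i) := by rw [pow_succ', mul_assoc]
    _ ≤ r * ∏ i ∈ Finset.Icc 1 n, f i :=
        mul_le_mul_of_nonneg_left (pow_mul_prod_Icc_le hr₀ hr₁ hf k) hr₀

theorem inv_prod_le (h : basisFormD M N L ε Q c a v p q) (hM : M ≠ 0) (hN : N ≠ 0)
    (hε : 0 < ε) (hQ : ∀ j, 1 ≤ Q j) (ha : ∑ i, a i = 0) (hL : multBadlyApprox M N φ L)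
    (hφ : AntitoneOn φ (Set.Ici 0)) (hφ₀ : 0 < φ (geomMean N Q)) (hq : q s ≠ 0)
    (hv : enorm2 (v s) ≤ cubeRadius M N ε Q * r) (hr₀ : 0 < r) (hn : n < M + N)
    (hf : ∀ k ∈ Finset.Icc 1 n, r ≤ f k) (hQf : ∀ j : Fin N, M + j ≤ n → 1 ≤ Q j * f (M + j)) :
    (∏ k ∈ Finset.Icc 1 n, f k)⁻¹ ≤ Real.exp (M * |c|) *
      (1 + (ε * geomMean N Q ^ N / φ (geomMean N Q)) ^ ((n : ℝ) / (n + 1))) := by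
  have hG : 0 < geomMean N Q := geomMean_pos fun j => zero_lt_one.trans_le (hQ j)
  set G := geomMean N Q
  set P := ∏ k ∈ Finset.Icc 1 n, f k
  have hP : 0 < P := Finset.prod_pos fun k hk => hr₀.trans_le (hf k hk)
  have hW : 0 ≤ (ε * G ^ N / φ G) ^ ((n : ℝ) / (n + 1)) := by positivity
  rcases le_or_gt 1 r with hr₁ | hr₁
  · have hP₁ : 1 ≤ P := Finset.one_le_prod fun k hk => hr₁.trans (hf k hk)
    exact (inv_le_one_of_one_le₀ hP₁).trans (one_le_mul_of_one_le_of_one_le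
      (Real.one_le_exp (by positivity)) (le_add_of_nonneg_right hW))
  · have hlow := h.exp_neg_mul_div_le hM hN hε hQ ha hL hφ hq hv hr₀.le hr₁.le hn hf hQf
    have hpow : r ^ n ≤ P := by simpa using pow_mul_prod_Icc_le hr₀.le hr₁.le hf n
    calc P⁻¹ ≤ ((Real.exp (-(M * c)) * φ G / (ε * G ^ N)) ^ ((n : ℝ) / (n + 1)))⁻¹ :=
          inv_anti₀ (by positivity) (rpow_div_add_one_le hP.le (by positivity) hlow hpow)
      _ = (Real.exp (M * c) * (ε * G ^ N / φ G)) ^ ((n : ℝ) / (n + 1)) := by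
          rw [← Real.inv_rpow (by positivity), Real.exp_neg]
          congr 1
          field_simp
      _ ≤ Real.exp |M * c| * (ε * G ^ N / φ G) ^ ((n : ℝ) / (n + 1)) :=
          exp_mul_rpow_le (by positivity) (by positivity)
            (div_le_one_of_le₀ (by simp) (by positivity))
      _ ≤ Real.exp (M * |c|) * (1 + (ε * G ^ N / φ G) ^ ((n : ℝ) / (n + 1))) := by
          rw [abs_mul, Nat.abs_cast]
          gcongr
          exact le_add_of_nonneg_left zero_le_one

end basisFormD

theorem stmt13_general {M N : ℕ} (hM : 0 < M) (hN : 0 < N) {κ c ε : ℝ} (hκ : 1 ≤ κ) {φ : ℝ → ℝ}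
    (hφ : AntitoneOn φ (Set.Ici 0)) {L : Matrix (Fin M) (Fin N) ℝ} (hL : multBadlyApprox M N φ L)
    {Q : Fin N → ℝ} (hQ : ∀ j, 1 ≤ Q j) (hφ₀ : 0 < φ (geomMean N Q)) (hε : 0 < ε)
    {a : Fin M → ℝ} (ha : ∑ i, a i = 0) {v : Fin (M + N) → (Fin M ⊕ Fin N → ℝ)}
    {p : Fin (M + N) → Fin M → ℤ} {q : Fin (M + N) → Fin N → ℤ} (hli : LinearIndependent ℝ v)
    (hv : ∀ s : Fin (M + N), enorm2 (v s) ≤ κ * succMin (latticeD M N L ε Q c a) ((s : ℕ) + 1))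
    (hform : basisFormD M N L ε Q c a v p q) (hq : q ⟨0, by omega⟩ ≠ 0) {sbar : ℕ}
    (hsbar : sbar < M + N)
    (hI : ∀ (s : Fin (M + N)) (j : Fin N), (s : ℕ) + 1 ≤ sbar →
      ordIdx (Sum.inr j : Fin M ⊕ Fin N) = s + 2 → Sum.inr j ∈ Iset (v s)) :
    (ε * geomMean N Q ^ N) ^ ((sbar : ℝ) / ((M : ℝ) + (N : ℝ))) /
        ∏ r ∈ Finset.Icc 1 sbar, succMin (latticeD M N L ε Q c a) r ≤
      κ ^ (M + N) * Real.exp (M * |c|) * (1 + (ε * geomMean N Q ^ N / φ (geomMean N Q)) ^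
        ((sbar : ℝ) / ((sbar : ℝ) + 1))) := by
  have hQ₀ : ∀ j, 0 < Q j := fun j => zero_lt_one.trans_le (hQ j)
  have hκ₀ : 0 < κ := zero_lt_one.trans_le hκ
  have ht : 0 < cubeRadius M N ε Q := cubeRadius_pos hε hQ₀
  rw [← cubeRadius_pow hε hQ₀]
  set lam := succMin (latticeD M N L ε Q c a)
  set t := cubeRadius M N ε Q
  have hlam₁ : 0 < κ * lam 1 := (hform.enorm2_pos hM.ne' hε hQ₀ hq).trans_le (hv _)
  have hmono : ∀ k ∈ Finset.Icc 1 sbar, lam 1 ≤ lam k := fun k hk => by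
    obtain ⟨hk₁, hk₂⟩ := Finset.mem_Icc.1 hk
    have hkMN : k ≤ M + N := by omega
    exact succMin_le_succMin hk₁ (fun i => hform.mem_latticeD (Fin.castLE hkMN i))
      (hli.comp _ (Fin.castLE_injective hkMN))
  have hvt : ∀ s : Fin (M + N), enorm2 (v s) ≤ t * (κ * lam (s + 1) / t) := fun s =>
    (hv s).trans_eq (mul_div_cancel₀ _ ht.ne').symm
  have hQlam : ∀ j : Fin N, M + j ≤ sbar → 1 ≤ Q j * (κ * lam (M + j) / t) := fun j hj => by
    obtain ⟨k, hk⟩ : ∃ k, M + (j : ℕ) = k + 1 := Nat.exists_eq_add_one.2 (by omega)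
    have hIk := hI ⟨k, by omega⟩ j (hk ▸ hj) (congrArg (· + 1) hk)
    simpa only [hk] using hform.one_le_mul_of_mem_Iset hM.ne' hε hQ₀ (hvt _) hIk
  have hmain := hform.inv_prod_le (f := fun k => κ * lam k / t) hM.ne' hN.ne' hε hQ ha hL hφ hφ₀
    hq (hvt _) (div_pos hlam₁ ht) hsbar (fun k hk => by have := hmono k hk; gcongr) hQlam
  calc t ^ sbar / ∏ r ∈ Finset.Icc 1 sbar, lam r
      = κ ^ sbar * (∏ r ∈ Finset.Icc 1 sbar, κ * lam r / t)⁻¹ := by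
        rw [Finset.prod_div_distrib, Finset.prod_mul_distrib]
        simp only [Finset.prod_const, Nat.card_Icc, Nat.add_sub_cancel]
        field_simp
    _ ≤ κ ^ (M + N) * (Real.exp (M * |c|) * (1 + (ε * geomMean N Q ^ N / φ (geomMean N Q)) ^
          ((sbar : ℝ) / ((sbar : ℝ) + 1)))) := by
        refine mul_le_mul (pow_le_pow_right₀ hκ hsbar.le) hmain (inv_nonneg.2 ?_) (by positivity)
        exact Finset.prod_nonneg fun k hk =>
          div_nonneg (hlam₁.le.trans (mul_le_mul_of_nonneg_left (hmono k hk) hκ₀.le)) ht.le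
    _ = _ := (mul_assoc _ _ _).symm

theorem stmt13 (M N : ℕ) (hM : 0 < M) (hN : 0 < N) (κ : ℝ) (hκ : 1 ≤ κ)
    (c c₁ : ℝ) (hc₁ : 0 < c₁) :
    ∃ c₂ : ℝ, 0 < c₂ ∧
      ∀ φ : ℝ → ℝ, AntitoneOn φ (Set.Ici 0) → (∀ x : ℝ, 0 ≤ x → φ x ∈ Set.Ioc (0 : ℝ) 1) →
      ∀ L : Matrix (Fin M) (Fin N) ℝ, multBadlyApprox M N φ L →
      ∀ Q : Fin N → ℝ, (∀ j, 1 ≤ Q j) →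
      ∀ ε T : ℝ, 0 < ε → 0 < T →
      ∀ a : Fin M → ℝ, (∑ i, a i) = 0 →
        (∀ i, c₁ * ε ^ ((1 : ℝ) / (M : ℝ)) / T ≤ muVal M N ε Q c a i) →
      ∀ (v : Fin (M + N) → (Fin M ⊕ Fin N → ℝ))
        (p : Fin (M + N) → Fin M → ℤ) (q : Fin (M + N) → Fin N → ℤ),
        -- `v` is a `ℤ`-basis of `Λ' = D Λ_L`
        LinearIndependent ℝ v →
        (↑(Submodule.span ℤ (Set.range v)) : Set (Fin M ⊕ Fin N → ℝ)) =
          latticeD M N L ε Q c a →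
        -- `|v^s|₂ ≤ κ λ_s` (here `v s` plays the role of `v^(s+1)`)
        (∀ s : Fin (M + N),
          enorm2 (v s) ≤ κ * succMin (latticeD M N L ε Q c a) ((s : ℕ) + 1)) →
        basisFormD M N L ε Q c a v p q →
        -- `q^s ≠ 0` for all `s`
        (∀ s : Fin (M + N), q s ≠ 0) →
        -- `I(v^s) ⊆ I(v^(s+1))`
        (∀ (s : ℕ) (h1 : s < M + N) (h2 : s + 1 < M + N),
          Iset (v ⟨s, h1⟩) ⊆ Iset (v ⟨s + 1, h2⟩)) →
        -- `l ∈ I(v^s)` implies `{1, …, l} ⊆ I(v^s)`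
        (∀ (s : Fin (M + N)) (k : Fin M ⊕ Fin N), k ∈ Iset (v s) →
          ∀ k' : Fin M ⊕ Fin N, ordIdx k' ≤ ordIdx k → k' ∈ Iset (v s)) →
        -- `{1, …, max{M+1, s}} ⊆ I(v^s)`
        (∀ (s : Fin (M + N)) (k : Fin M ⊕ Fin N),
          ordIdx k ≤ max (M + 1) ((s : ℕ) + 1) → k ∈ Iset (v s)) →
        ∀ sbar : ℕ, M ≤ sbar → sbar ≤ M + N - 1 →
          -- `{1, …, s+1} ⊆ I(v^s)` for all `s = 1, …, sbar`
          (∀ s : Fin (M + N), (s : ℕ) + 1 ≤ sbar →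
            ∀ k : Fin M ⊕ Fin N, ordIdx k ≤ (s : ℕ) + 2 → k ∈ Iset (v s)) →
          (ε * geomMean N Q ^ N) ^ ((sbar : ℝ) / ((M : ℝ) + (N : ℝ))) /
              ∏ r ∈ Finset.Icc 1 sbar, succMin (latticeD M N L ε Q c a) r ≤
            c₂ * (1 + (ε * geomMean N Q ^ N / φ (geomMean N Q)) ^
              ((sbar : ℝ) / ((sbar : ℝ) + 1))) := by
  refine ⟨κ ^ (M + N) * Real.exp (M * |c|), by positivity, ?_⟩
  intro φ hφ hφ₀ L hL Q hQ ε T hε _ a ha _ v p q hli _ hv hform hq _ _ _ sbar _ hsbar hI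
  exact stmt13_general hM hN hκ hφ hL hQ
    (hφ₀ _ (geomMean_pos fun j => zero_lt_one.trans_le (hQ j)).le).1 hε ha hli hv hform (hq _)
    (by omega) fun s j hs hj => hI s hs _ hj.le
end
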